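/- Ramanujan's quadratic transformation: for real x with |x| small enough that all arguments lie in the domain of analyticity, (1+x²)^(1/4)·F((1+ix)/2) = ((1+i)/2)·F((1 + x/√(1+x²))/2) + ((1-i)/2)·F((1 - x/√(1+x²))/2), where F(z) = ₂F₁(1/2,1/2;1;z). -/

import Mathlib

/-!
For `a = b = 1/2`, `c = 1` Gauss's hypergeometric equation is Legendre's equation
`(z(1-z)F')' = F/4`. Along the line `z = (1+ix)/2` it reads `((1+x²)y')' = -y/4`, and along
`z = (1±t)/2` it reads `((1-t²)g')' = g/4`. Whipple's substitution
`g ↦ (1+x²)^(-1/4) g(x/√(1+x²))` carries solutions of the second equation to solutions of the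
first, so both sides of the transformation, divided by `(1+x²)^(1/4)`, solve one and the same
linear equation. Their values and derivatives at `x = 0` agree because the coefficients `(1±i)/2`
have sum `1` and difference `i`, and the solution is determined by these initial data.
-/

open Real Complex

/-- The Gauss hypergeometric function `F(z) = ₂F₁(1/2, 1/2; 1; z)` given by its power series
`∑ₙ ((1/2)ₙ(1/2)ₙ/((1)ₙ n!)) zⁿ` (with `(1/2)ₙ/n! = (2n)!/(4ⁿ (n!)²)`), which converges on
the open unit disk; for `|x|` small all arguments below lie in this disk. -/
noncomputable def hypF (z : ℂ) : ℂ :=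
  ∑' n : ℕ, ((((2*n).factorial : ℂ)) / (4^n * (n.factorial : ℂ)^2))^2 * z^n

section PowerSeries

variable {a : ℕ → ℂ} {f : ℂ → ℂ} {R : ℝ} {z : ℂ}

lemma summable_norm_mul_pow_of_hasSum_pow
    (hf : ∀ w, ‖w‖ < R → HasSum (fun n => a n * w ^ n) (f w)) {r : ℝ} (hr₀ : 0 ≤ r) (hr : r < R) :
    Summable fun n => ‖a n‖ * r ^ n := by
  have hnorm : ‖(r : ℂ)‖ = r := by rw [Complex.norm_real, Real.norm_of_nonneg hr₀]
  simpa only [norm_mul, norm_pow, hnorm] using (hf r (hnorm.trans_lt hr)).summable.norm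

lemma differentiableAt_and_hasSum_deriv_of_hasSum_pow
    (hf : ∀ w, ‖w‖ < R → HasSum (fun n => a n * w ^ n) (f w)) (hz : ‖z‖ < R) :
    DifferentiableAt ℂ f z ∧
      HasSum (fun n : ℕ => ((n : ℂ) + 1) * a (n + 1) * z ^ n) (deriv f z) := by
  obtain ⟨r, hzr, hrR⟩ := exists_between hz
  have hsum := summable_norm_mul_pow_of_hasSum_pow hf ((norm_nonneg z).trans hzr.le) hrR
  have hterm (n : ℕ) : DifferentiableOn ℂ (fun w => a n * w ^ n) (Metric.ball 0 r) := by fun_prop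
  have hbound (n : ℕ) (w : ℂ) (hw : w ∈ Metric.ball 0 r) : ‖a n * w ^ n‖ ≤ ‖a n‖ * r ^ n := by
    rw [norm_mul, norm_pow]
    gcongr
    exact (mem_ball_zero_iff.1 hw).le
  have hz_mem : z ∈ Metric.ball 0 r := mem_ball_zero_iff.2 hzr
  have hnhds : Metric.ball 0 r ∈ nhds z := Metric.isOpen_ball.mem_nhds hz_mem
  have heq : f =ᶠ[nhds z] fun w => ∑' n, a n * w ^ n := by
    filter_upwards [hnhds] with w hw
    exact (hf w ((mem_ball_zero_iff.1 hw).trans hrR)).tsum_eq.symm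
  constructor
  · exact ((differentiableOn_tsum_of_summable_norm hsum hterm Metric.isOpen_ball
      hbound).differentiableAt hnhds).congr_of_eventuallyEq heq
  · have hderiv := hasSum_deriv_of_summable_norm hsum hterm Metric.isOpen_ball hbound hz_mem
    rw [← heq.deriv_eq, ← hasSum_nat_add_iff' 1] at hderiv
    simpa [mul_assoc, mul_left_comm] using hderiv

lemma hasSum_natCast_mul_pow {s : ℂ}
    (h : HasSum (fun n : ℕ => ((n : ℂ) + 1) * a (n + 1) * z ^ n) s) :
    HasSum (fun n : ℕ => (n : ℂ) * a n * z ^ n) (z * s) := by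
  rw [← hasSum_nat_add_iff' 1]
  simpa [pow_succ', mul_assoc, mul_left_comm z] using h.mul_left z

end PowerSeries

section Hypergeometric

lemma ordinaryHypergeometricCoefficient_succ {K : Type*} [Field K] [CharZero K] (a b : K) {c : K}
    (hc : ∀ k : ℕ, c ≠ -k) (n : ℕ) :
    ((n : K) + 1) * (c + n) * ordinaryHypergeometricCoefficient a b c (n + 1) =
      (a + n) * (b + n) * ordinaryHypergeometricCoefficient a b c n := by
  have hn : (n : K) + 1 ≠ 0 := n.cast_add_one_ne_zero
  have hcn : c + n ≠ 0 := fun h => hc n (eq_neg_of_add_eq_zero_left h)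
  simp only [ordinaryHypergeometricCoefficient, ascPochhammer_succ_eval, Nat.factorial_succ,
    Nat.cast_mul, Nat.cast_add, Nat.cast_one, mul_inv]
  field_simp

lemma one_le_radius_ordinaryHypergeometricSeries {𝕜 : Type*} (A : Type*) [RCLike 𝕜]
    [NormedDivisionRing A] [NormedAlgebra 𝕜 A] (a b c : 𝕜) :
    1 ≤ (ordinaryHypergeometricSeries A a b c).radius := by
  by_cases h : ∀ k : ℕ, (k : 𝕜) ≠ -a ∧ (k : 𝕜) ≠ -b ∧ (k : 𝕜) ≠ -c
  · exact (ordinaryHypergeometricSeries_radius_eq_one A a b c h).ge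
  · simp only [not_forall, not_and_or, not_not, eq_neg_iff_add_eq_zero, add_eq_zero_iff_neg_eq] at h
    obtain ⟨k, rfl | rfl | rfl⟩ := h
    · simp [ordinaryHypergeometric_radius_top_of_neg_nat₁]
    · simp [ordinaryHypergeometric_radius_top_of_neg_nat₂]
    · simp [ordinaryHypergeometric_radius_top_of_neg_nat₃]

variable {z : ℂ}

lemma hasSum_ordinaryHypergeometric (a b c : ℂ) (hz : ‖z‖ < 1) :
    HasSum (fun n => ordinaryHypergeometricCoefficient a b c n * z ^ n) (₂F₁ a b c z) := by
  have hmem : z ∈ Metric.eball 0 (ordinaryHypergeometricSeries ℂ a b c).radius := by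
    rw [Metric.mem_eball, edist_zero_right]
    refine lt_of_lt_of_le ?_ (one_le_radius_ordinaryHypergeometricSeries ℂ a b c)
    rwa [← ofReal_norm, ENNReal.ofReal_lt_one]
  simpa only [ordinaryHypergeometricSeries_apply_eq', smul_eq_mul] using!
    (ordinaryHypergeometricSeries ℂ a b c).hasSum hmem

lemma differentiableAt_ordinaryHypergeometric (a b c : ℂ) (hz : ‖z‖ < 1) :
    DifferentiableAt ℂ (₂F₁ a b c) z :=
  (differentiableAt_and_hasSum_deriv_of_hasSum_pow
    (fun _ => hasSum_ordinaryHypergeometric a b c) hz).1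

lemma hasSum_deriv_ordinaryHypergeometric (a b c : ℂ) (hz : ‖z‖ < 1) :
    HasSum (fun n : ℕ => ((n : ℂ) + 1) * ordinaryHypergeometricCoefficient a b c (n + 1) * z ^ n)
      (deriv (₂F₁ a b c) z) :=
  (differentiableAt_and_hasSum_deriv_of_hasSum_pow
    (fun _ => hasSum_ordinaryHypergeometric a b c) hz).2

lemma differentiableAt_deriv_ordinaryHypergeometric (a b c : ℂ) (hz : ‖z‖ < 1) :
    DifferentiableAt ℂ (deriv (₂F₁ a b c)) z :=
  (differentiableAt_and_hasSum_deriv_of_hasSum_pow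
    (fun _ => hasSum_deriv_ordinaryHypergeometric a b c) hz).1

theorem ordinaryHypergeometric_differentialEquation (a b : ℂ) {c : ℂ} (hc : ∀ k : ℕ, c ≠ -k)
    (hz : ‖z‖ < 1) :
    z * (1 - z) * deriv (deriv (₂F₁ a b c)) z + (c - (a + b + 1) * z) * deriv (₂F₁ a b c) z =
      a * b * ₂F₁ a b c z := by
  set A := ordinaryHypergeometricCoefficient a b c
  have hF := hasSum_ordinaryHypergeometric a b c hz
  have hF' := hasSum_deriv_ordinaryHypergeometric a b c hz
  have hF'' := (differentiableAt_and_hasSum_deriv_of_hasSum_pow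
    (a := fun n : ℕ => ((n : ℂ) + 1) * A (n + 1))
    (fun _ => hasSum_deriv_ordinaryHypergeometric a b c) hz).2
  have hzF' := hasSum_natCast_mul_pow hF'
  have hzF'' := hasSum_natCast_mul_pow (a := fun n : ℕ => ((n : ℂ) + 1) * A (n + 1)) hF''
  have hzzF'' : HasSum (fun n : ℕ => (n : ℂ) * ((n - 1) * A n) * z ^ n)
      (z * (z * deriv (deriv (₂F₁ a b c)) z)) := by
    refine hasSum_natCast_mul_pow (a := fun n : ℕ => ((n : ℂ) - 1) * A n) ?_
    exact hzF''.congr_fun fun n => by push_cast; ring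
  have hright : HasSum (fun n => a * b * (A n * z ^ n))
      (z * deriv (deriv (₂F₁ a b c)) z - z * (z * deriv (deriv (₂F₁ a b c)) z) +
        c * deriv (₂F₁ a b c) z - (a + b + 1) * (z * deriv (₂F₁ a b c) z)) := by
    refine (((hzF''.sub hzzF'').add (hF'.mul_left c)).sub
      (hzF'.mul_left (a + b + 1))).congr_fun fun n => ?_
    linear_combination -z ^ n * ordinaryHypergeometricCoefficient_succ a b hc n
  linear_combination hright.unique (hF.mul_left (a * b))

lemma hasDerivAt_mul_deriv_ordinaryHypergeometric {a b : ℂ} (hab : a + b = 1) (hz : ‖z‖ < 1) :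
    HasDerivAt (fun w => w * (1 - w) * deriv (₂F₁ a b (1 : ℂ)) w)
      (a * b * ₂F₁ a b (1 : ℂ) z) z := by
  have hone (k : ℕ) : (1 : ℂ) ≠ -k := by
    rw [ne_eq, eq_neg_iff_add_eq_zero, add_comm]
    exact k.cast_add_one_ne_zero
  refine (((hasDerivAt_id z).mul ((hasDerivAt_id z).const_sub 1)).mul
    (differentiableAt_deriv_ordinaryHypergeometric a b 1 hz).hasDerivAt).congr_deriv ?_
  rw [← ordinaryHypergeometric_differentialEquation a b hone hz, hab]
  simp only [id, Pi.mul_apply]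
  ring

lemma ascPochhammer_eval_one_half {K : Type*} [Field K] [CharZero K] (n : ℕ) :
    (ascPochhammer K n).eval (1 / 2) = (2 * n).factorial / (4 ^ n * n.factorial) := by
  induction n with
  | zero => simp
  | succ n ih =>
    have hn : (n : K) + 1 ≠ 0 := n.cast_add_one_ne_zero
    have hfact : (n.factorial : K) ≠ 0 := Nat.cast_ne_zero.2 n.factorial_ne_zero
    rw [ascPochhammer_succ_eval, ih, Nat.mul_succ, Nat.factorial_succ, Nat.factorial_succ,
      Nat.factorial_succ]
    push_cast
    field_simp
    ring

lemma hypF_eq_ordinaryHypergeometric : hypF = ₂F₁ (1 / 2 : ℂ) (1 / 2 : ℂ) (1 : ℂ) := by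
  ext z
  rw [hypF, ordinaryHypergeometric_eq_tsum]
  refine tsum_congr fun n => ?_
  have hfact : (n.factorial : ℂ) ≠ 0 := Nat.cast_ne_zero.2 n.factorial_ne_zero
  rw [ascPochhammer_eval_one_half, ascPochhammer_eval_one, smul_eq_mul]
  field_simp

end Hypergeometric

section SturmLiouville

variable {E : Type*} [NormedAddCommGroup E] [NormedSpace ℝ E]

/-- `y`, with derivative `y'`, solves the Sturm–Liouville equation `(p y')' = q y` on `s`.
The derivative is part of the data, so that an initial condition is a pair of values. -/
structure IsSturmLiouvilleSolution (p q : ℝ → ℝ) (s : Set ℝ) (y y' : ℝ → E) : Prop where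
  hasDerivAt : ∀ t ∈ s, HasDerivAt y (y' t) t
  hasDerivAt_flux : ∀ t ∈ s, HasDerivAt (fun u => p u • y' u) (q t • y t) t

namespace IsSturmLiouvilleSolution

variable {p q : ℝ → ℝ} {s s' : Set ℝ} {y y' w w' : ℝ → E}

lemma mono (h : IsSturmLiouvilleSolution p q s y y') (hs : s' ⊆ s) :
    IsSturmLiouvilleSolution p q s' y y' :=
  ⟨fun t ht => h.hasDerivAt t (hs ht), fun t ht => h.hasDerivAt_flux t (hs ht)⟩

lemma add (hy : IsSturmLiouvilleSolution p q s y y') (hw : IsSturmLiouvilleSolution p q s w w') :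
    IsSturmLiouvilleSolution p q s (y + w) (y' + w') where
  hasDerivAt t ht := (hy.hasDerivAt t ht).add (hw.hasDerivAt t ht)
  hasDerivAt_flux t ht := by
    simpa only [Pi.add_apply, smul_add] using!
      (hy.hasDerivAt_flux t ht).add (hw.hasDerivAt_flux t ht)

lemma const_smul {M : Type*} [Monoid M] [DistribMulAction M E] [SMulCommClass ℝ M E]
    [ContinuousConstSMul M E] (c : M) (h : IsSturmLiouvilleSolution p q s y y') :
    IsSturmLiouvilleSolution p q s (c • y) (c • y') where
  hasDerivAt t ht := (h.hasDerivAt t ht).const_smul c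
  hasDerivAt_flux t ht := by
    simpa only [Pi.smul_def, smul_comm _ c] using (h.hasDerivAt_flux t ht).const_smul c

lemma hasDerivAt_phase (h : IsSturmLiouvilleSolution p q s y y') {t : ℝ} (ht : t ∈ s)
    (hp : p t ≠ 0) :
    HasDerivAt (fun u => (y u, p u • y' u)) ((p t)⁻¹ • p t • y' t, q t • y t) t := by
  rw [inv_smul_smul₀ hp]
  exact (h.hasDerivAt t ht).prodMk (h.hasDerivAt_flux t ht)

lemma lipschitzWith_phaseField {K : NNReal} {m k : ℝ} (hm : ‖m‖₊ ≤ K) (hk : ‖k‖₊ ≤ K) :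
    LipschitzWith K fun Y : E × E => (m • Y.2, k • Y.1) := by
  have hfst : LipschitzWith K fun Y : E × E => m • Y.2 :=
    ((lipschitzWith_smul m).comp LipschitzWith.prod_snd).weaken (by simpa using hm)
  have hsnd : LipschitzWith K fun Y : E × E => k • Y.1 :=
    ((lipschitzWith_smul k).comp LipschitzWith.prod_fst).weaken (by simpa using hk)
  simpa using hfst.prodMk hsnd

theorem eqOn_Ioo {a b t₀ : ℝ} (hp : ContinuousOn p (Set.Ioo a b)) (hp₀ : ∀ t ∈ Set.Ioo a b, p t ≠ 0)
    (hq : ContinuousOn q (Set.Ioo a b)) (ht₀ : t₀ ∈ Set.Ioo a b)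
    (hy : IsSturmLiouvilleSolution p q (Set.Ioo a b) y y')
    (hw : IsSturmLiouvilleSolution p q (Set.Ioo a b) w w')
    (h₀ : y t₀ = w t₀) (h₀' : y' t₀ = w' t₀) : Set.EqOn y w (Set.Ioo a b) := by
  intro t ht
  obtain ⟨a', ha, ha'⟩ := exists_between (lt_min ht₀.1 ht.1)
  obtain ⟨b', hb', hb⟩ := exists_between (max_lt ht₀.2 ht.2)
  rw [lt_min_iff] at ha'
  rw [max_lt_iff] at hb'
  have hIcc : Set.Icc a' b' ⊆ Set.Ioo a b := Set.Icc_subset_Ioo ha hb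
  have hIoo : Set.Ioo a' b' ⊆ Set.Ioo a b := Set.Ioo_subset_Icc_self.trans hIcc
  obtain ⟨M, hM⟩ := isCompact_Icc.exists_bound_of_continuousOn ((hp.inv₀ hp₀).mono hIcc)
  obtain ⟨N, hN⟩ := isCompact_Icc.exists_bound_of_continuousOn (hq.mono hIcc)
  have hlip (u : ℝ) (hu : u ∈ Set.Ioo a' b') : LipschitzOnWith (max M N).toNNReal
      (fun Y : E × E => ((p u)⁻¹ • Y.2, q u • Y.1)) Set.univ := by
    have hu := Set.Ioo_subset_Icc_self hu
    refine (lipschitzWith_phaseField ?_ ?_).lipschitzOnWith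
    · exact NNReal.le_toNNReal_of_coe_le ((hM u hu).trans (le_max_left M N))
    · exact NNReal.le_toNNReal_of_coe_le ((hN u hu).trans (le_max_right M N))
  have heq := ODE_solution_unique_of_mem_Ioo hlip ⟨ha'.1, hb'.1⟩
    (fun u hu => ⟨hy.hasDerivAt_phase (hIoo hu) (hp₀ u (hIoo hu)), Set.mem_univ _⟩)
    (fun u hu => ⟨hw.hasDerivAt_phase (hIoo hu) (hp₀ u (hIoo hu)), Set.mem_univ _⟩)
    (by rw [h₀, h₀'])
  exact congrArg Prod.fst (heq ⟨ha'.2, hb'.2⟩)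

end IsSturmLiouvilleSolution

end SturmLiouville

section QuarterPow

/-- The weight `(1 + x²)^(1/4)`, in which every power of `1 + x²` below is integral. -/
noncomputable def quarterPow (x : ℝ) : ℝ := (1 + x ^ 2) ^ ((1 : ℝ) / 4)

lemma quarterPow_pos (x : ℝ) : 0 < quarterPow x := Real.rpow_pos_of_pos (by positivity) _

lemma quarterPow_zero : quarterPow 0 = 1 := by simp [quarterPow]

lemma quarterPow_pow_four (x : ℝ) : quarterPow x ^ 4 = 1 + x ^ 2 := by
  have hx : 0 ≤ 1 + x ^ 2 := by positivity
  simpa [quarterPow] using Real.rpow_inv_natCast_pow hx four_ne_zero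

lemma sqrt_one_add_sq_eq_quarterPow_sq (x : ℝ) : √(1 + x ^ 2) = quarterPow x ^ 2 := by
  rw [← quarterPow_pow_four, show quarterPow x ^ 4 = (quarterPow x ^ 2) ^ 2 by ring,
    Real.sqrt_sq (by positivity)]

lemma hasDerivAt_quarterPow (x : ℝ) :
    HasDerivAt quarterPow (x / (2 * quarterPow x ^ 3)) x := by
  have hx : 1 + x ^ 2 ≠ 0 := by positivity
  have hρ := (quarterPow_pos x).ne'
  refine (((hasDerivAt_pow 2 x).const_add 1).rpow_const (p := (1 : ℝ) / 4)
    (Or.inl hx)).congr_deriv ?_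
  rw [Real.rpow_sub_one hx, ← quarterPow, ← quarterPow_pow_four]
  field_simp
  ring

lemma hasDerivAt_div_sqrt_one_add_sq (x : ℝ) :
    HasDerivAt (fun u : ℝ => u / √(1 + u ^ 2)) (1 / quarterPow x ^ 6) x := by
  have hρ := (quarterPow_pos x).ne'
  simp only [sqrt_one_add_sq_eq_quarterPow_sq]
  refine ((hasDerivAt_id x).div ((hasDerivAt_quarterPow x).pow 2)
    (pow_ne_zero 2 hρ)).congr_deriv ?_
  simp only [id, Pi.pow_apply, one_mul, Nat.cast_ofNat, Nat.add_one_sub_one, pow_one]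
  field_simp
  linear_combination quarterPow_pow_four x

lemma one_sub_div_sqrt_one_add_sq_sq (x : ℝ) :
    1 - (x / √(1 + x ^ 2)) ^ 2 = (quarterPow x ^ 4)⁻¹ := by
  have hρ := (quarterPow_pos x).ne'
  rw [sqrt_one_add_sq_eq_quarterPow_sq]
  field_simp
  linear_combination quarterPow_pow_four x

lemma div_sqrt_one_add_sq_mem_Ioo (x : ℝ) : x / √(1 + x ^ 2) ∈ Set.Ioo (-1 : ℝ) 1 := by
  have hpos : 0 < 1 - (x / √(1 + x ^ 2)) ^ 2 := by
    rw [one_sub_div_sqrt_one_add_sq_sq]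
    exact inv_pos.2 (pow_pos (quarterPow_pos x) 4)
  exact abs_lt.1 ((sq_lt_one_iff_abs_lt_one _).1 (sub_pos.1 hpos))

end QuarterPow

section Legendre

variable {E : Type*} [NormedAddCommGroup E] [NormedSpace ℝ E]

theorem IsSturmLiouvilleSolution.comp_div_sqrt_one_add_sq {g g' : ℝ → E}
    (h : IsSturmLiouvilleSolution (fun t => 1 - t ^ 2) (fun _ => 1 / 4) (Set.Ioo (-1) 1) g g') :
    IsSturmLiouvilleSolution (fun x => 1 + x ^ 2) (fun _ => -1 / 4) Set.univ
      (fun x => (quarterPow x)⁻¹ • g (x / √(1 + x ^ 2)))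
      (fun x => (quarterPow x ^ 7)⁻¹ • g' (x / √(1 + x ^ 2)) -
        (x / (2 * quarterPow x ^ 5)) • g (x / √(1 + x ^ 2))) := by
  have hy (x : ℝ) : HasDerivAt (fun u => (quarterPow u)⁻¹ • g (u / √(1 + u ^ 2)))
      ((quarterPow x ^ 7)⁻¹ • g' (x / √(1 + x ^ 2)) -
        (x / (2 * quarterPow x ^ 5)) • g (x / √(1 + x ^ 2))) x := by
    have hρ := (quarterPow_pos x).ne'
    refine (((hasDerivAt_quarterPow x).inv hρ).smul
      ((h.hasDerivAt _ (div_sqrt_one_add_sq_mem_Ioo x)).scomp x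
        (hasDerivAt_div_sqrt_one_add_sq x))).congr_deriv ?_
    simp only [Pi.inv_apply, Function.comp_apply]
    match_scalars <;> field_simp
  refine ⟨fun x _ => hy x, fun x _ => ?_⟩
  have hρ := (quarterPow_pos x).ne'
  have hflux : (fun u => (1 + u ^ 2) • ((quarterPow u ^ 7)⁻¹ • g' (u / √(1 + u ^ 2)) -
        (u / (2 * quarterPow u ^ 5)) • g (u / √(1 + u ^ 2)))) =
      fun u => quarterPow u • (1 - (u / √(1 + u ^ 2)) ^ 2) • g' (u / √(1 + u ^ 2)) -
        (u / 2) • (quarterPow u)⁻¹ • g (u / √(1 + u ^ 2)) := by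
    ext u
    have hρu := (quarterPow_pos u).ne'
    rw [one_sub_div_sqrt_one_add_sq_sq, ← quarterPow_pow_four]
    match_scalars <;> field_simp
  rw [hflux]
  refine (((hasDerivAt_quarterPow x).smul
    ((h.hasDerivAt_flux _ (div_sqrt_one_add_sq_mem_Ioo x)).scomp x
      (hasDerivAt_div_sqrt_one_add_sq x))).sub
    (((hasDerivAt_id x).div_const 2).smul (hy x))).congr_deriv ?_
  simp only [Function.comp_apply, id, one_sub_div_sqrt_one_add_sq_sq]
  match_scalars
  · field_simp
    linear_combination -4 * quarterPow_pow_four x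
  · field_simp
    ring

theorem isSturmLiouvilleSolution_hypF {c : ℂ} {σ : ℝ} (hc : c ^ 2 = σ) {s : Set ℝ}
    (hs : ∀ t ∈ s, ‖(1 + c * t) / 2‖ < 1) :
    IsSturmLiouvilleSolution (fun t => 1 - σ * t ^ 2) (fun _ => σ / 4) s
      (fun t => hypF ((1 + c * t) / 2)) (fun t => c / 2 * deriv hypF ((1 + c * t) / 2)) := by
  have hline (t : ℝ) : HasDerivAt (fun u : ℝ => (1 + c * u) / 2) (c / 2) t := by
    simpa using (((hasDerivAt_id t).ofReal_comp.const_mul c).const_add 1).div_const 2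
  rw [hypF_eq_ordinaryHypergeometric]
  refine ⟨fun t ht => ?_, fun t ht => ?_⟩
  · exact (differentiableAt_ordinaryHypergeometric _ _ _ (hs t ht)).hasDerivAt.scomp t (hline t)
  · have hflux := ((hasDerivAt_mul_deriv_ordinaryHypergeometric (a := 1 / 2) (b := 1 / 2)
      (by norm_num) (hs t ht)).scomp t (hline t)).const_mul (2 * c)
    refine (hflux.congr_deriv ?_).congr_of_eventuallyEq (.of_forall fun u => ?_)
    · simp only [real_smul, smul_eq_mul, ofReal_div, ofReal_ofNat, ← hc]
      ring
    · simp only [Function.comp_apply, real_smul, ofReal_sub, ofReal_one, ofReal_mul, ofReal_pow,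
        ← hc]
      ring

end Legendre

lemma norm_one_add_div_two_lt_one {w : ℂ} (hw : ‖w‖ < 1) : ‖(1 + w) / 2‖ < 1 := by
  have htriangle := norm_add_le 1 w
  rw [norm_one] at htriangle
  rw [norm_div, Complex.norm_ofNat, div_lt_one two_pos]
  linarith

lemma norm_one_add_I_mul_div_two_lt_one {x : ℝ} (hx : |x| < √3) : ‖(1 + I * x) / 2‖ < 1 := by
  have hsq : x ^ 2 < 3 := by simpa using (Real.lt_sqrt (abs_nonneg x)).1 hx
  rw [norm_div, Complex.norm_ofNat, div_lt_one two_pos, ← sq_lt_sq₀ (norm_nonneg _) zero_le_two,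
    ← normSq_eq_norm_sq, mul_comm, ← ofReal_one, normSq_add_mul_I]
  linarith

lemma isSturmLiouvilleSolution_hypF_of_sq_eq_one {c : ℂ} (hc : c ^ 2 = 1) :
    IsSturmLiouvilleSolution (fun t => 1 - t ^ 2) (fun _ => 1 / 4) (Set.Ioo (-1) 1)
      (fun t => hypF ((1 + c * t) / 2)) (fun t => c / 2 * deriv hypF ((1 + c * t) / 2)) := by
  have hnorm : ‖c‖ = 1 := norm_eq_one_of_pow_eq_one hc two_ne_zero
  simpa only [one_mul] using isSturmLiouvilleSolution_hypF (hc.trans ofReal_one.symm) fun t ht =>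
    norm_one_add_div_two_lt_one (by simpa [hnorm] using abs_lt.2 ht)

lemma isSturmLiouvilleSolution_hypF_I :
    IsSturmLiouvilleSolution (fun t => 1 + t ^ 2) (fun _ => -1 / 4) (Set.Ioo (-√3) √3)
      (fun t => hypF ((1 + I * t) / 2)) (fun t => I / 2 * deriv hypF ((1 + I * t) / 2)) := by
  have hI : I ^ 2 = ((-1 : ℝ) : ℂ) := by simp
  have hnorm (t : ℝ) (ht : t ∈ Set.Ioo (-√3) √3) := norm_one_add_I_mul_div_two_lt_one (abs_lt.2 ht)
  simpa only [neg_one_mul, sub_neg_eq_add] using isSturmLiouvilleSolution_hypF hI hnorm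

theorem ramanujan_quadratic_transformation_general {x : ℝ} (hx : |x| < √3) :
    (((1 + x ^ 2) ^ ((1 : ℝ) / 4) : ℝ) : ℂ) * hypF ((1 + I * x) / 2) =
      (1 + I) / 2 * hypF (((1 + x / √(1 + x ^ 2)) / 2 : ℝ)) +
      (1 - I) / 2 * hypF (((1 - x / √(1 + x ^ 2)) / 2 : ℝ)) := by
  have hV (c : ℂ) (hc : c ^ 2 = 1) :=
    (isSturmLiouvilleSolution_hypF_of_sq_eq_one hc).comp_div_sqrt_one_add_sq.mono
      (Set.subset_univ (Set.Ioo (-√3) √3))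
  have hvalue : hypF (1 / 2) = (1 + I) / 2 * hypF (1 / 2) + (1 - I) / 2 * hypF (1 / 2) := by ring
  have hslope : I / 2 * deriv hypF (1 / 2) =
      (1 + I) / 2 * (1 / 2 * deriv hypF (1 / 2)) + (1 - I) / 2 * (-1 / 2 * deriv hypF (1 / 2)) := by
    ring
  have heq := isSturmLiouvilleSolution_hypF_I.eqOn_Ioo (t₀ := 0) (by fun_prop)
    (fun t _ => by positivity) (by fun_prop) (by simp)
    (((hV 1 (by norm_num)).const_smul ((1 + I) / 2)).add
      ((hV (-1) (by norm_num)).const_smul ((1 - I) / 2)))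
    (by simpa [quarterPow_zero] using hvalue) (by simpa [quarterPow_zero] using hslope)
    (abs_lt.1 hx)
  have hρ : (quarterPow x : ℂ) ≠ 0 := ofReal_ne_zero.2 (quarterPow_pos x).ne'
  simp only [Pi.add_apply, Pi.smul_apply, real_smul, smul_eq_mul, one_mul, neg_one_mul,
    ← sub_eq_add_neg] at heq
  rw [← quarterPow, heq]
  push_cast
  field_simp

/-- Ramanujan's quadratic transformation: for real `x` with `|x|` small enough,
`(1+x²)^(1/4)·F((1+ix)/2) = ((1+i)/2)·F((1 + x/√(1+x²))/2) + ((1-i)/2)·F((1 - x/√(1+x²))/2)`,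
where `F(z) = ₂F₁(1/2,1/2;1;z)`. -/
theorem ramanujan_quadratic_transformation :
    ∃ δ > (0:ℝ), ∀ x : ℝ, |x| < δ →
      (((1 + x^2) ^ ((1:ℝ)/4) : ℝ) : ℂ) * hypF ((1 + Complex.I * x) / 2) =
        ((1 + Complex.I) / 2) * hypF ((((1 + x / Real.sqrt (1 + x^2)) / 2 : ℝ)) : ℂ) +
        ((1 - Complex.I) / 2) * hypF ((((1 - x / Real.sqrt (1 + x^2)) / 2 : ℝ)) : ℂ) :=
  ⟨√3, by positivity, fun _ hx => ramanujan_quadratic_transformation_general hx⟩
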